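/- Let G be a finite r-regular graph with girth g, equipped with a random label assignment with probabilities (p₀,p), and let i ≥ 1 with 2i < g−3 and 2(i+2) < g−2. Then for any vertex u: (i) P(u ∈ W_i | u ∈ W_{i−1}) = (1 − p·s_{i−1}/w_{i−1})^r, and (ii) P(u ∈ B_i | u ∈ W_{i−1}) = (r·p·s_{i−1}/w_{i−1})·(1 − p·s_{i−1}/w_{i−1})^{r−1}. -/

import Mathlib

open MeasureTheory ProbabilityTheory Filter Set

namespace InducedForest

variable {V : Type*}

/-- Label `i` is *relevant* for vertex `v` (w.r.t. the label assignment `S`):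
either `i = 0` and `0 ∈ S v`, or `i ∈ S v`, no `j < i` is relevant for `v`, and
there is a unique neighbour of `v` having a relevant label strictly smaller than `i`. -/
def Relevant (G : SimpleGraph V) (S : V → Set ℕ) (i : ℕ) : V → Prop :=
  Nat.strongRecOn i (fun i ih v =>
    (i = 0 ∧ 0 ∈ S v) ∨
    (i ∈ S v ∧ (∀ j, (h : j < i) → ¬ ih j h v) ∧
      (∃! u, G.Adj v u ∧ ∃ j, ∃ h : j < i, ih j h u)))

/-- `v` has some relevant label `≤ l`, i.e. `v ∈ R_{≤ l}`. -/
def RelevantLe (G : SimpleGraph V) (S : V → Set ℕ) (l : ℕ) (v : V) : Prop :=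
  ∃ i ≤ l, Relevant G S i v

inductive Colour | white | blue | orange | purple
deriving DecidableEq

open Classical in
/-- The colour of `u` at time `l`. -/
noncomputable def colourAt (G : SimpleGraph V) (S : V → Set ℕ) (l : ℕ) (u : V) : Colour :=
  if RelevantLe G S l u then Colour.purple
  else if ∀ v, G.Adj u v → ¬ RelevantLe G S l v then Colour.white
  else if ∃! v, G.Adj u v ∧ RelevantLe G S l v then Colour.blue
  else Colour.orange

/-- The set `W_l` of white vertices at time `l`. -/
def White (G : SimpleGraph V) (S : V → Set ℕ) (l : ℕ) : Set V :=
  {u | ¬ RelevantLe G S l u ∧ ∀ v, G.Adj u v → ¬ RelevantLe G S l v}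

/-- The set `B_l` of blue vertices at time `l`. -/
def Blue (G : SimpleGraph V) (S : V → Set ℕ) (l : ℕ) : Set V :=
  {u | ¬ RelevantLe G S l u ∧ ∃! v, G.Adj u v ∧ RelevantLe G S l v}
/-- The label assignment determined by a sample point `ω`. -/
def labels (ω : V → ℕ → Bool) : V → Set ℕ := fun v => {i | ω v i = true}

/-- `μ` is the random label assignment with probabilities `(p₀, p)`: the events
`i ∈ S(v)` are mutually independent, and each has probability `p₀` if `i = 0`
and `p` if `i ≥ 1`. -/
def IsLabelMeasure (μ : Measure (V → ℕ → Bool)) (p₀ p : ℝ) : Prop :=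
  IsProbabilityMeasure μ ∧
  iIndepSet (fun q : V × ℕ => {ω : V → ℕ → Bool | ω q.1 q.2 = true}) μ ∧
  ∀ (v : V) (i : ℕ), μ {ω | ω v i = true} = ENNReal.ofReal (if i = 0 then p₀ else p)

/-- Event that `u` is white at time `l`. -/
def WEv (G : SimpleGraph V) (l : ℕ) (u : V) : Set (V → ℕ → Bool) :=
  {ω | u ∈ White G (labels ω) l}

/-- Event that `u` is blue at time `l`. -/
def BEv (G : SimpleGraph V) (l : ℕ) (u : V) : Set (V → ℕ → Bool) :=
  {ω | u ∈ Blue G (labels ω) l}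

/-- Event that `u` has relevant label `i`, i.e. `u ∈ R_i`. -/
def REv (G : SimpleGraph V) (i : ℕ) (u : V) : Set (V → ℕ → Bool) :=
  {ω | Relevant G (labels ω) i u}

/-- Event that `u` has a relevant label `≤ l`, i.e. `u ∈ R_{≤ l}`. -/
def RLeEv (G : SimpleGraph V) (l : ℕ) (u : V) : Set (V → ℕ → Bool) :=
  {ω | RelevantLe G (labels ω) l u}

/-- `G` is `r`-regular. -/
def IsRegular (G : SimpleGraph V) (r : ℕ) : Prop :=
  ∀ v : V, (G.neighborSet v).ncard = r

/-! ### Graph part -/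

theorem walk_unique (G : SimpleGraph V) {n : ℕ} {x y : V} (hg : (n : ℕ∞) ≤ G.egirth)
    (P Q : G.Walk x y) (hP : P.edges.IsChain (· ≠ ·)) (hQ : Q.edges.IsChain (· ≠ ·))
    (hlen : P.length + Q.length < n) : P = Q := by
  classical
  set H : SimpleGraph V := SimpleGraph.fromEdgeSet {e | e ∈ P.edges ++ Q.edges} with hH
  have hHG : H ≤ G := by
    intro a b hab
    rw [hH, SimpleGraph.fromEdgeSet_adj] at hab
    have h1 := hab.1
    simp only [mem_ofPred_eq, List.mem_append] at h1
    rcases h1 with h1 | h1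
    · exact P.edges_subset_edgeSet h1
    · exact Q.edges_subset_edgeSet h1
  have hac : H.IsAcyclic := by
    intro a w hw
    have hc : (w.mapLe hHG).IsCycle := hw.mapLe hHG
    have h1 : (n : ℕ∞) ≤ (w.mapLe hHG).length := hg.trans (SimpleGraph.egirth_le_length hc)
    have h2 : n ≤ w.length := by
      simpa using h1
    have h3 : w.edges ⊆ P.edges ++ Q.edges := by
      intro e he
      have h := w.edges_subset_edgeSet he
      rw [hH, SimpleGraph.edgeSet_fromEdgeSet] at h
      exact h.1
    have h4 := (List.subperm_of_subset hw.edges_nodup h3).length_le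
    simp at h4
    omega
  have memP : ∀ e ∈ P.edges, e ∈ H.edgeSet := by
    intro e he
    rw [hH, SimpleGraph.edgeSet_fromEdgeSet]
    exact ⟨by simp [he], G.not_isDiag_of_mem_edgeSet (P.edges_subset_edgeSet he)⟩
  have memQ : ∀ e ∈ Q.edges, e ∈ H.edgeSet := by
    intro e he
    rw [hH, SimpleGraph.edgeSet_fromEdgeSet]
    exact ⟨by simp [he], G.not_isDiag_of_mem_edgeSet (Q.edges_subset_edgeSet he)⟩
  have hP' : (P.transfer H memP).IsPath := by
    rw [hac.isPath_iff_isChain, SimpleGraph.Walk.edges_transfer]; exact hP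
  have hQ' : (Q.transfer H memQ).IsPath := by
    rw [hac.isPath_iff_isChain, SimpleGraph.Walk.edges_transfer]; exact hQ
  have := (hac.subsingleton_path x y).elim ⟨_, hP'⟩ ⟨_, hQ'⟩
  have h5 : P.transfer H memP = Q.transfer H memQ := congrArg Subtype.val this
  apply SimpleGraph.Walk.ext_support
  have := congrArg SimpleGraph.Walk.support h5
  simpa using this

/-- Vertices reached from `v` by non-backtracking walks of length at most `l` not starting
with the edge `vu`. -/
def Br (G : SimpleGraph V) (l : ℕ) (v u : V) : Set V :=
  {x | ∃ h : G.Adj u v, ∃ P : G.Walk v x, P.length ≤ l ∧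
    (SimpleGraph.Walk.cons h P).edges.IsChain (· ≠ ·)}

theorem self_mem_Br (G : SimpleGraph V) (l : ℕ) {v u : V} (h : G.Adj u v) : v ∈ Br G l v u :=
  ⟨h, SimpleGraph.Walk.nil, by simp, by simp⟩

theorem Br_mono (G : SimpleGraph V) {l k : ℕ} (h : l ≤ k) (v u : V) : Br G l v u ⊆ Br G k v u := by
  rintro x ⟨h1, P, h2, h3⟩
  exact ⟨h1, P, h2.trans h, h3⟩

theorem Br_step (G : SimpleGraph V) (l : ℕ) {v u w : V} (h : G.Adj u v) (hw : w ≠ u) :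
    Br G l w v ⊆ Br G (l + 1) v u := by
  rintro x ⟨h1, P, h2, h3⟩
  refine ⟨h, SimpleGraph.Walk.cons h1 P, by simpa using h2, ?_⟩
  rw [SimpleGraph.Walk.edges_cons, SimpleGraph.Walk.edges_cons, List.isChain_cons_cons]
  refine ⟨?_, by rwa [SimpleGraph.Walk.edges_cons] at h3⟩
  intro he
  rw [Sym2.eq_iff] at he
  rcases he with ⟨rfl, rfl⟩ | ⟨h4, _⟩
  · exact G.loopless.irrefl _ h
  · exact hw h4.symm

theorem Br_disjoint (G : SimpleGraph V) {n l : ℕ} (hg : (n : ℕ∞) ≤ G.egirth) (hl : 2 * (l + 1) < n)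
    {u v v' : V} (hne : v ≠ v') : Disjoint (Br G l v u) (Br G l v' u) := by
  rw [Set.disjoint_left]
  rintro x ⟨h1, P, h2, h3⟩ ⟨k1, Q, k2, k3⟩
  have := walk_unique G hg _ _ h3 k3 (by simp; omega)
  injection this with _ h
  exact hne h

theorem not_mem_Br (G : SimpleGraph V) {n l : ℕ} (hg : (n : ℕ∞) ≤ G.egirth) (hl : 2 * (l + 1) < n)
    {u v : V} : u ∉ Br G l v u := by
  rintro ⟨h1, P, h2, h3⟩
  have := walk_unique G hg _ SimpleGraph.Walk.nil h3 (by simp) (by simp; omega)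
  cases this

/-! ### Deterministic part -/

theorem relevant_def (G : SimpleGraph V) (S : V → Set ℕ) (i : ℕ) (v : V) :
    Relevant G S i v ↔ (i = 0 ∧ 0 ∈ S v) ∨
    (i ∈ S v ∧ (∀ j, j < i → ¬ Relevant G S j v) ∧
      (∃! u, G.Adj v u ∧ ∃ j, j < i ∧ Relevant G S j u)) := by
  unfold Relevant
  rw [Nat.strongRecOn, WellFounded.fix_eq]
  simp only [exists_prop]
  rfl

theorem relevantLe_zero (G : SimpleGraph V) (S : V → Set ℕ) (v : V) :
    RelevantLe G S 0 v ↔ 0 ∈ S v := by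
  unfold RelevantLe
  constructor
  · rintro ⟨i, hi, h⟩
    obtain rfl : i = 0 := by omega
    rw [relevant_def] at h
    rcases h with h | h
    · exact h.2
    · exact h.1
  · intro h
    exact ⟨0, le_rfl, by rw [relevant_def]; exact Or.inl ⟨rfl, h⟩⟩

theorem relevantLe_succ (G : SimpleGraph V) (S : V → Set ℕ) (l : ℕ) (v : V) :
    RelevantLe G S (l + 1) v ↔ RelevantLe G S l v ∨
      (l + 1 ∈ S v ∧ ∃! u, G.Adj v u ∧ RelevantLe G S l u) := by
  have key : ∀ u, (∃ j, j < l + 1 ∧ Relevant G S j u) ↔ RelevantLe G S l u := by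
    intro u
    simp only [RelevantLe, Nat.lt_succ_iff]
  constructor
  · rintro ⟨i, hi, h⟩
    rcases Nat.lt_or_ge i (l + 1) with h1 | h1
    · exact Or.inl ⟨i, by omega, h⟩
    · obtain rfl : i = l + 1 := by omega
      rw [relevant_def] at h
      rcases h with h | ⟨h, _, h'⟩
      · omega
      · simp only [key] at h'
        exact Or.inr ⟨h, h'⟩
  · intro h
    by_cases h0 : RelevantLe G S l v
    · obtain ⟨i, hi, h⟩ := h0
      exact ⟨i, by omega, h⟩
    · rcases h with h | ⟨h1, h2⟩
      · exact absurd h h0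
      · refine ⟨l + 1, le_rfl, ?_⟩
        rw [relevant_def]
        refine Or.inr ⟨h1, fun j hj hr => h0 ⟨j, by omega, hr⟩, ?_⟩
        simp only [key]
        exact h2

theorem RelevantLe.mono {G : SimpleGraph V} {S : V → Set ℕ} {l k : ℕ} (h : l ≤ k) {v : V}
    (hv : RelevantLe G S l v) : RelevantLe G S k v := by
  obtain ⟨i, hi, h'⟩ := hv
  exact ⟨i, hi.trans h, h'⟩

/-- Cavity process: `v` is relevant by time `l` when its neighbour `u` is ignored. -/
def Cav (G : SimpleGraph V) (S : V → Set ℕ) : ℕ → V → V → Prop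
  | 0, v, _ => 0 ∈ S v
  | l + 1, v, u => Cav G S l v u ∨ (l + 1 ∈ S v ∧ ∃! w, (G.Adj v w ∧ w ≠ u) ∧ Cav G S l w v)

theorem Cav.mono {G : SimpleGraph V} {S : V → Set ℕ} {l k : ℕ} (h : l ≤ k) {v u : V}
    (hv : Cav G S l v u) : Cav G S k v u := by
  induction h with
  | refl => exact hv
  | step _ ih => exact Or.inl ih

theorem cav_iff (G : SimpleGraph V) (S : V → Set ℕ) (l : ℕ) : ∀ (v u : V),
    (∀ k < l, ¬ RelevantLe G S k u) → (RelevantLe G S l v ↔ Cav G S l v u) := by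
  induction l with
  | zero => intro v u _; rw [relevantLe_zero]; rfl
  | succ l ih =>
    intro v u hu
    rw [relevantLe_succ]
    have h1 := ih v u (fun k hk => hu k (by omega))
    by_cases h2 : RelevantLe G S l v
    · exact ⟨fun _ => Or.inl (h1.1 h2), fun _ => Or.inl h2⟩
    · have h3 : ∀ w, (G.Adj v w ∧ RelevantLe G S l w) ↔ ((G.Adj v w ∧ w ≠ u) ∧ Cav G S l w v) := by
        intro w
        rw [← ih w v (fun k hk hr => h2 (hr.mono (by omega)))]
        constructor
        · rintro ⟨h4, h5⟩
          refine ⟨⟨h4, ?_⟩, h5⟩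
          rintro rfl
          exact hu l (by omega) h5
        · rintro ⟨⟨h4, _⟩, h5⟩
          exact ⟨h4, h5⟩
      simp only [h3]
      rw [h1]
      rfl

theorem white_iff (G : SimpleGraph V) (S : V → Set ℕ) (l : ℕ) (u : V) :
    u ∈ White G S l ↔ 0 ∉ S u ∧ ∀ v, G.Adj u v → ¬ Cav G S l v u := by
  constructor
  · rintro ⟨h1, h2⟩
    refine ⟨fun h => h1 (((relevantLe_zero G S u).2 h).mono (Nat.zero_le _)), fun v hv hc => ?_⟩
    rw [← cav_iff G S l v u (fun k hk hr => h1 (hr.mono hk.le))] at hc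
    exact h2 v hv hc
  · rintro ⟨h1, h2⟩
    have key : ∀ k ≤ l, ¬ RelevantLe G S k u := by
      intro k
      induction k with
      | zero => intro _; rwa [relevantLe_zero]
      | succ k ih =>
        intro hk hr
        have hk' := ih (by omega)
        rw [relevantLe_succ] at hr
        rcases hr with hr | ⟨_, v, ⟨hv, hr⟩, _⟩
        · exact hk' hr
        · rw [cav_iff G S k v u (fun j hj hr => hk' (hr.mono hj.le))] at hr
          exact h2 v hv (hr.mono (by omega))
    refine ⟨key l le_rfl, fun v hv hr => ?_⟩
    rw [cav_iff G S l v u (fun k hk => key k hk.le)] at hr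
    exact h2 v hv hr

/-- `v` is not relevant at time `l`, but has exactly one relevant child. -/
def Dv (G : SimpleGraph V) (S : V → Set ℕ) (l : ℕ) (v u : V) : Prop :=
  ¬ Cav G S l v u ∧ ∃! w, (G.Adj v w ∧ w ≠ u) ∧ Cav G S l w v

theorem cav_succ (G : SimpleGraph V) (S : V → Set ℕ) (l : ℕ) (v u : V) :
    (¬ Cav G S l v u ∧ Cav G S (l + 1) v u) ↔ (l + 1 ∈ S v ∧ Dv G S l v u) := by
  simp only [Dv, Cav]; tauto

theorem blue_white_iff (G : SimpleGraph V) (S : V → Set ℕ) (l : ℕ) {u v : V} (h : G.Adj v u) :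
    (v ∈ Blue G S l ∧ u ∈ White G S l) ↔
      (0 ∉ S u ∧ Dv G S l v u ∧ ∀ v', (G.Adj u v' ∧ v' ≠ v) → ¬ Cav G S l v' u) := by
  have aux : u ∈ White G S l → (v ∈ Blue G S l ↔ Dv G S l v u) := by
    rintro ⟨h1, h2⟩
    have hv := h2 v h.symm
    have e1 := cav_iff G S l v u (fun k hk hr => h1 (hr.mono hk.le))
    have e2 : ∀ w, (G.Adj v w ∧ RelevantLe G S l w) ↔ ((G.Adj v w ∧ w ≠ u) ∧ Cav G S l w v) := by
      intro w
      rw [← cav_iff G S l w v (fun k hk hr => hv (hr.mono hk.le))]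
      constructor
      · rintro ⟨h4, h5⟩
        refine ⟨⟨h4, ?_⟩, h5⟩
        rintro rfl
        exact h1 h5
      · rintro ⟨⟨h4, _⟩, h5⟩
        exact ⟨h4, h5⟩
    simp only [Blue, Dv, mem_ofPred_eq, e1, e2]
  constructor
  · rintro ⟨h1, h2⟩
    have h3 := (aux h2).1 h1
    rw [white_iff] at h2
    exact ⟨h2.1, h3, fun v' hv' => h2.2 v' hv'.1⟩
  · rintro ⟨h1, h2, h3⟩
    have hw : u ∈ White G S l := by
      rw [white_iff]
      refine ⟨h1, fun v' hv' => ?_⟩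
      by_cases e : v' = v
      · subst e; exact h2.1
      · exact h3 v' ⟨hv', e⟩
    exact ⟨(aux hw).2 h2, hw⟩

theorem white_blue_succ_iff (G : SimpleGraph V) (S : V → Set ℕ) (l : ℕ) (u : V) :
    (u ∈ White G S l ∧ u ∈ Blue G S (l + 1)) ↔
      ∃ v, G.Adj u v ∧ (0 ∉ S u ∧ (l + 1 ∈ S v ∧ Dv G S l v u) ∧
        ∀ v', (G.Adj u v' ∧ v' ≠ v) → ¬ Cav G S (l + 1) v' u) := by
  have aux : u ∈ White G S l →
      (u ∈ Blue G S (l + 1) ↔ ∃! v, G.Adj u v ∧ Cav G S (l + 1) v u) := by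
    rintro ⟨h1, h2⟩
    have hn : ¬ RelevantLe G S (l + 1) u := by
      rw [relevantLe_succ]
      rintro (h | ⟨_, v, ⟨hv, hr⟩, _⟩)
      · exact h1 h
      · exact h2 v hv hr
    have e2 : ∀ w, RelevantLe G S (l + 1) w ↔ Cav G S (l + 1) w u := fun w =>
      cav_iff G S (l + 1) w u (fun k hk hr => h1 (hr.mono (by omega)))
    have hn' := hn
    rw [e2] at hn'
    simp only [Blue, mem_ofPred_eq, e2, hn', not_false_eq_true, true_and]
  constructor
  · rintro ⟨h1, h2⟩
    obtain ⟨v, ⟨hv, hc⟩, hu⟩ := (aux h1).1 h2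
    rw [white_iff] at h1
    refine ⟨v, hv, h1.1, (cav_succ _ _ _ _ _).1 ⟨h1.2 v hv, hc⟩, ?_⟩
    rintro v' ⟨h3, h4⟩ h5
    exact h4 (hu v' ⟨h3, h5⟩)
  · rintro ⟨v, hv, h0, h1, h2⟩
    rw [← cav_succ] at h1
    have hw : u ∈ White G S l := by
      rw [white_iff]
      refine ⟨h0, fun v' hv' => ?_⟩
      by_cases e : v' = v
      · subst e; exact h1.1
      · exact fun hc => h2 v' ⟨hv', e⟩ (hc.mono (by omega))
    refine ⟨hw, (aux hw).2 ⟨v, ⟨hv, h1.2⟩, ?_⟩⟩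
    rintro v' ⟨h3, h4⟩
    by_contra h5
    exact h2 v' ⟨h3, h5⟩ h4

/-- First time at which `Cav` holds. -/
def Fst (G : SimpleGraph V) (S : V → Set ℕ) (j : ℕ) (v u : V) : Prop :=
  Cav G S j v u ∧ ∀ k < j, ¬ Cav G S k v u

theorem fst_zero (G : SimpleGraph V) (S : V → Set ℕ) (v u : V) :
    Fst G S 0 v u ↔ 0 ∈ S v := by
  simp [Fst, Cav]

theorem fst_succ (G : SimpleGraph V) (S : V → Set ℕ) (j : ℕ) (v u : V) :
    Fst G S (j + 1) v u ↔ (j + 1 ∈ S v ∧ Dv G S j v u) := by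
  rw [← cav_succ, Fst]
  constructor
  · rintro ⟨h1, h2⟩; exact ⟨h2 j (by omega), h1⟩
  · rintro ⟨h1, h2⟩
    exact ⟨h2, fun k hk hc => h1 (hc.mono (by omega))⟩

theorem cav_iff_fst (G : SimpleGraph V) (S : V → Set ℕ) (l : ℕ) (v u : V) :
    Cav G S l v u ↔ ∃ j ∈ Finset.range (l + 1), Fst G S j v u := by
  classical
  constructor
  · intro h
    have hex : ∃ j, Cav G S j v u := ⟨l, h⟩
    refine ⟨Nat.find hex, ?_, Nat.find_spec hex, fun k hk => Nat.find_min hex hk⟩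
    have := Nat.find_min' hex h
    rw [Finset.mem_range]; omega
  · rintro ⟨j, hj, h⟩
    simp at hj
    exact h.1.mono (by omega)

theorem fst_unique {G : SimpleGraph V} {S : V → Set ℕ} {j k : ℕ} {v u : V}
    (h : Fst G S j v u) (h' : Fst G S k v u) : j = k := by
  rcases lt_trichotomy j k with hl | hl | hl
  · exact absurd h.1 (h'.2 j hl)
  · exact hl
  · exact absurd h'.1 (h.2 k hl)

theorem not_cav_of (G : SimpleGraph V) (S : V → Set ℕ) (l : ℕ) (v u : V)
    (h0 : 0 ∉ S v) (h : ∀ k < l, k + 1 ∈ S v → ¬ ∃! w, (G.Adj v w ∧ w ≠ u) ∧ Cav G S k w v) :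
    ¬ Cav G S l v u := by
  induction l with
  | zero => exact h0
  | succ l ih =>
    rintro (h1 | ⟨h1, h2⟩)
    · exact ih (fun k hk => h k (by omega)) h1
    · exact h l (by omega) h1 h2

/-- Labels that must be missing if a unique child appears at time `j`. -/
def Miss (j l : ℕ) : Finset ℕ := (Finset.range (l + 1)).filter (fun k => k = 0 ∨ j < k)

theorem dv_iff (G : SimpleGraph V) (S : V → Set ℕ) (l : ℕ) (v u : V) :
    Dv G S l v u ↔ ∃ w, (G.Adj v w ∧ w ≠ u) ∧ ∃ j ∈ Finset.range (l + 1),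
      ((∀ k ∈ Miss j l, k ∉ S v) ∧ Fst G S j w v ∧
        ∀ w', ((G.Adj v w' ∧ w' ≠ u) ∧ w' ≠ w) → ¬ Cav G S l w' v) := by
  constructor
  · rintro ⟨hn, w, ⟨hw, hc⟩, hu⟩
    obtain ⟨j, hj, hf⟩ := (cav_iff_fst _ _ _ _ _).1 hc
    have hj' := hj
    simp at hj'
    refine ⟨w, hw, j, hj, ?_, hf, ?_⟩
    · intro k hk hks
      simp only [Miss, Finset.mem_filter, Finset.mem_range] at hk
      rcases hk with ⟨h1, h2 | h2⟩
      · subst h2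
        exact hn (Cav.mono (Nat.zero_le l) (show Cav G S 0 v u from hks))
      · obtain ⟨k, rfl⟩ : ∃ k', k = k' + 1 := ⟨k - 1, by omega⟩
        refine hn (Cav.mono (show k + 1 ≤ l by omega) (Or.inr ⟨hks, w, ⟨hw, ?_⟩, ?_⟩))
        · exact hf.1.mono (by omega)
        · rintro w' ⟨h3, h4⟩
          exact hu w' ⟨h3, h4.mono (by omega)⟩
    · rintro w' ⟨h1, h2⟩ h3
      exact h2 (hu w' ⟨h1, h3⟩)
  · rintro ⟨w, hw, j, hj, hm, hf, ho⟩
    simp at hj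
    refine ⟨not_cav_of _ _ _ _ _ (hm 0 (by simp [Miss])) ?_, w, ⟨hw, hf.1.mono (by omega)⟩, ?_⟩
    · rintro k hk hks ⟨w', ⟨h1, h2⟩, _⟩
      have : ¬ j < k + 1 := fun hlt => hm (k + 1) (by simp [Miss]; omega) hks
      by_cases e : w' = w
      · subst e
        exact hf.2 k (by omega) h2
      · exact ho w' ⟨h1, e⟩ (h2.mono hk.le)
    · rintro w' ⟨h1, h2⟩
      by_contra e
      exact ho w' ⟨h1, e⟩ h2

/-! ### Probability part -/

/-- The event that label `q.2` belongs to `S(q.1)`. -/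
def Lab (q : V × ℕ) : Set (V → ℕ → Bool) := {ω | ω q.1 q.2 = true}

/-- The sigma-algebra generated by the labels in `A`. -/
def Fm (A : Set (V × ℕ)) : MeasurableSpace (V → ℕ → Bool) :=
  ⨆ q ∈ A, MeasurableSpace.generateFrom {Lab q}

theorem Fm_mono {A B : Set (V × ℕ)} (h : A ⊆ B) : Fm A ≤ Fm B :=
  biSup_mono h

theorem Lab_measurable (q : V × ℕ) : MeasurableSet (Lab q) := by
  have : Measurable (fun ω : V → ℕ → Bool => ω q.1 q.2) := by fun_prop
  exact this (MeasurableSet.singleton true)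

theorem gen_le (q : V × ℕ) :
    MeasurableSpace.generateFrom {Lab q} ≤ (inferInstance : MeasurableSpace (V → ℕ → Bool)) := by
  apply MeasurableSpace.generateFrom_le
  rintro t rfl
  exact Lab_measurable q

theorem Fm_le (A : Set (V × ℕ)) : Fm A ≤ (inferInstance : MeasurableSpace (V → ℕ → Bool)) :=
  iSup₂_le fun q _ => gen_le q

theorem Lab_mem {A : Set (V × ℕ)} {q : V × ℕ} (h : q ∈ A) : MeasurableSet[Fm A] (Lab q) := by
  have : MeasurableSpace.generateFrom {Lab q} ≤ Fm A :=
    le_iSup₂_of_le (f := fun q (_ : q ∈ A) => MeasurableSpace.generateFrom {Lab q}) q h le_rfl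
  exact this _ (MeasurableSpace.measurableSet_generateFrom rfl)

theorem indep2 {μ : Measure (V → ℕ → Bool)} {p₀ p : ℝ} (hμ : IsLabelMeasure μ p₀ p)
    {A B : Set (V × ℕ)} (hAB : Disjoint A B) {E F : Set (V → ℕ → Bool)}
    (hE : MeasurableSet[Fm A] E) (hF : MeasurableSet[Fm B] F) :
    μ.real (E ∩ F) = μ.real E * μ.real F := by
  have h1 : iIndep (fun q : V × ℕ => MeasurableSpace.generateFrom {Lab q}) μ :=
    (iIndepSet_iff_iIndep _ _).1 hμ.2.1
  have h2 := indep_iSup_of_disjoint gen_le h1 hAB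
  have h3 := (Indep_iff _ _ μ).1 h2 E F hE hF
  simp [Measure.real, h3]

theorem indep_fin {ι : Type*} {μ : Measure (V → ℕ → Bool)} {p₀ p : ℝ}
    (hμ : IsLabelMeasure μ p₀ p) (s : Finset ι) (A : ι → Set (V × ℕ))
    (hA : ∀ i ∈ s, ∀ j ∈ s, i ≠ j → Disjoint (A i) (A j)) (E : ι → Set (V → ℕ → Bool))
    (hE : ∀ i ∈ s, MeasurableSet[Fm (A i)] (E i)) :
    MeasurableSet[Fm (⋃ i ∈ s, A i)] (⋂ i ∈ s, E i) ∧
      μ.real (⋂ i ∈ s, E i) = ∏ i ∈ s, μ.real (E i) := by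
  classical
  have := hμ.1
  induction s using Finset.induction_on with
  | empty => simp
  | insert a s ha ih =>
    obtain ⟨ih1, ih2⟩ := ih (fun i hi j hj => hA i (by simp [hi]) j (by simp [hj]))
      (fun i hi => hE i (by simp [hi]))
    have hEa := hE a (by simp)
    constructor
    · rw [Finset.set_biInter_insert]
      apply MeasurableSet.inter
      · exact Fm_mono (by intro x hx; simp [hx]) _ hEa
      · refine Fm_mono ?_ _ ih1
        intro x hx
        simp only [mem_iUnion] at hx ⊢
        obtain ⟨i, hi, hx⟩ := hx
        exact ⟨i, by simp [hi], hx⟩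
    · rw [Finset.set_biInter_insert, Finset.prod_insert ha, ← ih2]
      refine indep2 hμ ?_ hEa ih1
      rw [Set.disjoint_iUnion₂_right]
      intro i hi
      exact hA a (by simp) i (by simp [hi]) (by rintro rfl; exact ha hi)

theorem star (G : SimpleGraph V) {n l : ℕ} (hg : (n : ℕ∞) ≤ G.egirth) (hl : 2 * (l + 1) < n)
    {μ : Measure (V → ℕ → Bool)} {p₀ p : ℝ} (hμ : IsLabelMeasure μ p₀ p)
    (v : V) (N : Finset V) (E0 : Set (V → ℕ → Bool)) (E : V → Set (V → ℕ → Bool))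
    (h0 : MeasurableSet[Fm ({v} ×ˢ univ)] E0)
    (hE : ∀ w ∈ N, MeasurableSet[Fm (Br G l w v ×ˢ univ)] (E w)) :
    μ.real (E0 ∩ ⋂ w ∈ N, E w) = μ.real E0 * ∏ w ∈ N, μ.real (E w) := by
  obtain ⟨h1, h2⟩ := indep_fin hμ N (fun w => Br G l w v ×ˢ univ) (by
    intro i _ j _ hij
    exact Set.disjoint_prod.2 (Or.inl (Br_disjoint G hg hl hij))) E hE
  rw [← h2]
  refine indep2 hμ ?_ h0 h1
  rw [Set.disjoint_iUnion₂_right]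
  intro i _
  refine Set.disjoint_prod.2 (Or.inl ?_)
  rw [Set.disjoint_singleton_left]
  exact not_mem_Br G hg hl

theorem star1 [DecidableEq V] (G : SimpleGraph V) {n l : ℕ} (hg : (n : ℕ∞) ≤ G.egirth)
    (hl : 2 * (l + 1) < n)
    {μ : Measure (V → ℕ → Bool)} {p₀ p : ℝ} (hμ : IsLabelMeasure μ p₀ p)
    (v : V) (N : Finset V) (x : V) (hx : x ∈ N)
    (E0 X : Set (V → ℕ → Bool)) (Y : V → Set (V → ℕ → Bool))
    (h0 : MeasurableSet[Fm ({v} ×ˢ univ)] E0)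
    (hX : MeasurableSet[Fm (Br G l x v ×ˢ univ)] X)
    (hY : ∀ w ∈ N, MeasurableSet[Fm (Br G l w v ×ˢ univ)] (Y w)) :
    μ.real {ω | ω ∈ E0 ∧ ω ∈ X ∧ ∀ w ∈ N.erase x, ω ∈ Y w}
      = μ.real E0 * (μ.real X * ∏ w ∈ N.erase x, μ.real (Y w)) := by
  have h := star G hg hl hμ v N E0 (fun w => if w = x then X else Y w) h0 (by
    intro w hw
    by_cases e : w = x
    · subst e; simpa using hX
    · simpa [e] using hY w hw)
  have e1 : {ω | ω ∈ E0 ∧ ω ∈ X ∧ ∀ w ∈ N.erase x, ω ∈ Y w}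
      = E0 ∩ ⋂ w ∈ N, (if w = x then X else Y w) := by
    ext ω
    simp only [mem_ofPred_eq, mem_inter_iff, mem_iInter, Finset.mem_erase]
    refine and_congr_right fun _ => ?_
    constructor
    · rintro ⟨h1, h2⟩ w hw
      by_cases e : w = x
      · simpa [e] using h1
      · simpa [e] using h2 w ⟨e, hw⟩
    · intro h1
      refine ⟨by simpa using h1 x hx, fun w hw => by simpa [hw.1] using h1 w hw.2⟩
  rw [e1, h, ← Finset.mul_prod_erase N _ hx]
  congr 2
  · simp
  · apply Finset.prod_congr rfl
    intro w hw
    simp [(Finset.mem_erase.1 hw).1]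

/-- Cavity event. -/
def CE (G : SimpleGraph V) (l : ℕ) (v u : V) : Set (V → ℕ → Bool) := {ω | Cav G (labels ω) l v u}
/-- Cavity blue event. -/
def DE (G : SimpleGraph V) (l : ℕ) (v u : V) : Set (V → ℕ → Bool) := {ω | Dv G (labels ω) l v u}
/-- First time event. -/
def FE (G : SimpleGraph V) (l : ℕ) (v u : V) : Set (V → ℕ → Bool) := {ω | Fst G (labels ω) l v u}
/-- Missing labels event. -/
def ME (K : Finset ℕ) (v : V) : Set (V → ℕ → Bool) := {ω | ∀ k ∈ K, k ∉ labels ω v}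

theorem meas_exu {Ω : Type*} {m : MeasurableSpace Ω} [Countable V] (a : V → Prop)
    (P : V → Ω → Prop) (h : ∀ w, a w → MeasurableSet {ω | P w ω}) :
    MeasurableSet {ω | ∃! w, a w ∧ P w ω} := by
  have h' : ∀ w, Measurable fun ω => a w ∧ P w ω := by
    intro w
    by_cases e : a w
    · simpa [e] using measurableSet_setOfPred.1 (h w e)
    · simp [e]
  apply measurableSet_setOfPred.2
  unfold ExistsUnique
  refine Measurable.exists fun w => (h' w).and (Measurable.forall fun y => (h' y).imp ?_)
  exact measurable_const

theorem CE_meas [Countable V] (G : SimpleGraph V) (l : ℕ) : ∀ (v u : V), G.Adj u v →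
    MeasurableSet[Fm (Br G l v u ×ˢ Iic l)] (CE G l v u) := by
  induction l with
  | zero =>
    intro v u h
    exact Lab_mem (q := (v, 0)) ⟨self_mem_Br G 0 h, by simp⟩
  | succ l ih =>
    intro v u h
    have e : CE G (l + 1) v u = CE G l v u ∪ (Lab (v, l + 1) ∩
        {ω | ∃! w, (G.Adj v w ∧ w ≠ u) ∧ Cav G (labels ω) l w v}) := rfl
    rw [e]
    refine MeasurableSet.union ?_ (MeasurableSet.inter ?_ ?_)
    · exact Fm_mono (Set.prod_mono (Br_mono G (by omega) v u) (Iic_subset_Iic.2 (by omega))) _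
        (ih v u h)
    · exact Lab_mem ⟨self_mem_Br G _ h, by simp⟩
    · refine meas_exu _ _ fun w hw => ?_
      exact Fm_mono (Set.prod_mono (Br_step G l h hw.2) (Iic_subset_Iic.2 (by omega))) _
        (ih w v hw.1)

theorem DE_meas [Countable V] (G : SimpleGraph V) (l : ℕ) (v u : V) (h : G.Adj u v) :
    MeasurableSet[Fm (Br G (l + 1) v u ×ˢ Iic l)] (DE G l v u) := by
  have e : DE G l v u = (CE G l v u)ᶜ ∩
        {ω | ∃! w, (G.Adj v w ∧ w ≠ u) ∧ Cav G (labels ω) l w v} := rfl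
  rw [e]
  refine MeasurableSet.inter (MeasurableSet.compl ?_) ?_
  · exact Fm_mono (Set.prod_mono (Br_mono G (by omega) v u) le_rfl) _ (CE_meas G l v u h)
  · refine meas_exu _ _ fun w hw => ?_
    exact Fm_mono (Set.prod_mono (Br_step G l h hw.2) le_rfl) _ (CE_meas G l w v hw.1)

theorem FE_succ (G : SimpleGraph V) (j : ℕ) (v u : V) :
    FE G (j + 1) v u = Lab (v, j + 1) ∩ DE G j v u := by
  ext ω
  exact fst_succ G (labels ω) j v u

theorem FE_zero (G : SimpleGraph V) (v u : V) : FE G 0 v u = Lab (v, 0) := by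
  ext ω
  exact fst_zero G (labels ω) v u

theorem FE_meas [Countable V] (G : SimpleGraph V) (l : ℕ) (v u : V) (h : G.Adj u v) :
    MeasurableSet[Fm (Br G l v u ×ˢ univ)] (FE G l v u) := by
  cases l with
  | zero => rw [FE_zero]; exact Lab_mem ⟨self_mem_Br G _ h, by simp⟩
  | succ l =>
    rw [FE_succ]
    refine MeasurableSet.inter (Lab_mem ⟨self_mem_Br G _ h, by simp⟩) ?_
    exact Fm_mono (Set.prod_mono le_rfl (subset_univ _)) _ (DE_meas G l v u h)

theorem CE_meas' [Countable V] (G : SimpleGraph V) {l k : ℕ} (hlk : l ≤ k) (v u : V)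
    (h : G.Adj u v) : MeasurableSet[Fm (Br G k v u ×ˢ univ)] (CE G l v u) :=
  Fm_mono (Set.prod_mono (Br_mono G hlk v u) (subset_univ _)) _ (CE_meas G l v u h)

theorem ME_eq (K : Finset ℕ) (v : V) : ME K v = ⋂ k ∈ K, (Lab (v, k))ᶜ := by
  ext ω
  simp [ME, Lab, labels]

theorem ME_meas (K : Finset ℕ) (v : V) : MeasurableSet[Fm ({v} ×ˢ univ)] (ME K v) := by
  rw [ME_eq]
  refine Finset.measurableSet_biInter _ fun k _ => MeasurableSet.compl ?_
  exact Lab_mem ⟨by simp, by simp⟩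

theorem Lab_real {μ : Measure (V → ℕ → Bool)} {p₀ p : ℝ} (hμ : IsLabelMeasure μ p₀ p)
    (hp₀ : p₀ ∈ Ioo (0 : ℝ) 1) (hp : p ∈ Ioo (0 : ℝ) 1) (v : V) (k : ℕ) :
    μ.real (Lab (v, k)) = if k = 0 then p₀ else p := by
  have : μ (Lab (v, k)) = _ := hμ.2.2 v k
  rw [Measure.real, this, ENNReal.toReal_ofReal]
  split_ifs
  · exact hp₀.1.le
  · exact hp.1.le

theorem ME_real {μ : Measure (V → ℕ → Bool)} {p₀ p : ℝ} (hμ : IsLabelMeasure μ p₀ p)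
    (hp₀ : p₀ ∈ Ioo (0 : ℝ) 1) (hp : p ∈ Ioo (0 : ℝ) 1) (K : Finset ℕ) (v : V) :
    μ.real (ME K v) = ∏ k ∈ K, (1 - if k = 0 then p₀ else p) := by
  have := hμ.1
  rw [ME_eq, (indep_fin hμ K (fun k => {(v, k)}) (by
    intro i _ j _ hij
    simpa using hij) (fun k => (Lab (v, k))ᶜ) (fun k _ => (Lab_mem (by simp)).compl)).2]
  refine Finset.prod_congr rfl fun k _ => ?_
  rw [probReal_compl_eq_one_sub (Lab_measurable _), Lab_real hμ hp₀ hp]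

open Classical in
/-- The neighbours of `u`. -/
noncomputable def nb [Fintype V] (G : SimpleGraph V) (u : V) : Finset V :=
  Finset.univ.filter (fun v => G.Adj u v)

theorem mem_nb [Fintype V] {G : SimpleGraph V} {u v : V} : v ∈ nb G u ↔ G.Adj u v := by
  simp [nb]

theorem nb_card [Fintype V] {G : SimpleGraph V} {r : ℕ} (hreg : IsRegular G r) (u : V) :
    (nb G u).card = r := by
  rw [← hreg u, ← Set.ncard_coe_finset]
  congr 1
  ext v
  simp [mem_nb]

theorem CE_measurable [Countable V] (G : SimpleGraph V) (l : ℕ) (v u : V) (h : G.Adj u v) :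
    MeasurableSet (CE G l v u) := Fm_le _ _ (CE_meas G l v u h)

theorem FE_measurable [Countable V] (G : SimpleGraph V) (l : ℕ) (v u : V) (h : G.Adj u v) :
    MeasurableSet (FE G l v u) := Fm_le _ _ (FE_meas G l v u h)

theorem FE_succ_real [Countable V] (G : SimpleGraph V)
    {μ : Measure (V → ℕ → Bool)} {p₀ p : ℝ} (hμ : IsLabelMeasure μ p₀ p)
    (hp₀ : p₀ ∈ Ioo (0 : ℝ) 1) (hp : p ∈ Ioo (0 : ℝ) 1) (j : ℕ) (v u : V) (h : G.Adj u v) :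
    μ.real (FE G (j + 1) v u) = p * μ.real (DE G j v u) := by
  rw [FE_succ, indep2 hμ (A := {(v, j + 1)}) ?_ (Lab_mem (by simp)) (DE_meas G j v u h),
    Lab_real hμ hp₀ hp]
  · simp
  · simp

theorem CE_real [Countable V] (G : SimpleGraph V)
    {μ : Measure (V → ℕ → Bool)} {p₀ p : ℝ} (hμ : IsLabelMeasure μ p₀ p)
    (l : ℕ) (v u : V) (h : G.Adj u v) :
    μ.real (CE G l v u) = ∑ j ∈ Finset.range (l + 1), μ.real (FE G j v u) := by
  have := hμ.1
  rw [← measureReal_biUnion_finset]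
  · congr 1
    ext ω
    simpa [CE, FE] using cav_iff_fst G (labels ω) l v u
  · intro j _ k _ hjk
    refine Set.disjoint_left.2 fun ω h1 h2 => hjk (fst_unique h1 h2)
  · intro j _
    exact FE_measurable G j v u h

theorem CE_succ_real [Countable V] (G : SimpleGraph V)
    {μ : Measure (V → ℕ → Bool)} {p₀ p : ℝ} (hμ : IsLabelMeasure μ p₀ p)
    (hp₀ : p₀ ∈ Ioo (0 : ℝ) 1) (hp : p ∈ Ioo (0 : ℝ) 1) (j : ℕ) (v u : V) (h : G.Adj u v) :
    μ.real (CE G (j + 1) v u) = μ.real (CE G j v u) + p * μ.real (DE G j v u) := by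
  rw [CE_real G hμ _ _ _ h, Finset.sum_range_succ, ← CE_real G hμ _ _ _ h,
    FE_succ_real G hμ hp₀ hp _ _ _ h]

open Classical in
theorem DE_real [Fintype V] (G : SimpleGraph V) {n l : ℕ} (hg : (n : ℕ∞) ≤ G.egirth)
    (hl : 2 * (l + 1) < n)
    {μ : Measure (V → ℕ → Bool)} {p₀ p : ℝ} (hμ : IsLabelMeasure μ p₀ p)
    (v u : V) :
    μ.real (DE G l v u) = ∑ w ∈ (nb G v).erase u, ∑ j ∈ Finset.range (l + 1),
      μ.real (ME (Miss j l) v) * (μ.real (FE G j w v) *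
        ∏ w' ∈ ((nb G v).erase u).erase w, μ.real (CE G l w' v)ᶜ) := by
  have := hμ.1
  have hadj : ∀ w ∈ (nb G v).erase u, G.Adj v w := fun w hw =>
    mem_nb.1 (Finset.mem_of_mem_erase hw)
  let Z : V × ℕ → Set (V → ℕ → Bool) := fun q =>
    {ω | ω ∈ ME (Miss q.2 l) v ∧ ω ∈ FE G q.2 q.1 v ∧
      ∀ w' ∈ ((nb G v).erase u).erase q.1, ω ∈ (CE G l w' v)ᶜ}
  have hZ : ∀ q ∈ (nb G v).erase u ×ˢ Finset.range (l + 1), μ.real (Z q) =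
      μ.real (ME (Miss q.2 l) v) * (μ.real (FE G q.2 q.1 v) *
        ∏ w' ∈ ((nb G v).erase u).erase q.1, μ.real (CE G l w' v)ᶜ) := by
    intro q hq
    rw [Finset.mem_product] at hq
    refine star1 G hg hl hμ v _ q.1 hq.1 _ _ _ (ME_meas _ _) ?_ ?_
    · have := Finset.mem_range.1 hq.2
      exact Fm_mono (Set.prod_mono (Br_mono G (by omega) _ _) le_rfl) _
        (FE_meas G q.2 q.1 v (hadj _ hq.1))
    · intro w hw
      exact (CE_meas' G le_rfl w v (hadj _ hw)).compl
  rw [← Finset.sum_product', ← Finset.sum_congr rfl hZ, ← measureReal_biUnion_finset]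
  · congr 1
    ext ω
    rw [show ω ∈ DE G l v u ↔ Dv G (labels ω) l v u from Iff.rfl, dv_iff]
    simp only [mem_iUnion, exists_prop, Finset.mem_product, Finset.mem_erase, Prod.exists, Z,
      mem_nb, ME, FE, CE, mem_ofPred_eq, mem_compl_iff]
    constructor
    · rintro ⟨w, hw, j, hj, h1, h2, h3⟩
      exact ⟨w, j, ⟨⟨hw.2, hw.1⟩, hj⟩, h1, h2, fun w' hw' => h3 w' ⟨⟨hw'.2.2, hw'.2.1⟩, hw'.1⟩⟩
    · rintro ⟨w, j, ⟨hw, hj⟩, h1, h2, h3⟩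
      exact ⟨w, ⟨hw.2, hw.1⟩, j, hj, h1, h2, fun w' hw' => h3 w' ⟨hw'.2, hw'.1.2, hw'.1.1⟩⟩
  · rintro ⟨w, j⟩ hq ⟨w', j'⟩ hq' hne
    refine Set.disjoint_left.2 ?_
    rintro ω ⟨_, h2, h3⟩ ⟨_, h2', h3'⟩
    simp only [Finset.coe_product, Set.mem_prod, Finset.mem_coe, Finset.mem_range] at hq hq'
    by_cases e : w = w'
    · subst e
      exact hne (Prod.ext rfl (fst_unique h2 h2'))
    · exact h3' w (Finset.mem_erase.2 ⟨e, hq.1⟩) (Cav.mono (by have := hq.2; omega) h2.1)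
  · rintro ⟨w, j⟩ hq
    rw [Finset.mem_product] at hq
    have e : Z (w, j) = ME (Miss j l) v ∩ (FE G j w v ∩
      ⋂ w' ∈ ((nb G v).erase u).erase w, (CE G l w' v)ᶜ) := by
      ext ω
      simp only [Z, mem_inter_iff, mem_iInter, mem_ofPred_eq]
    rw [e]
    refine (Fm_le _ _ (ME_meas _ _)).inter ((FE_measurable G _ _ _ (hadj _ hq.1)).inter ?_)
    refine Finset.measurableSet_biInter _ fun w' hw' => ?_
    exact (CE_measurable G _ _ _ (hadj _ (Finset.mem_of_mem_erase hw'))).compl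

open Classical in
theorem DE_const [Fintype V] (G : SimpleGraph V) {n r : ℕ} (hreg : IsRegular G r)
    (hg : (n : ℕ∞) ≤ G.egirth)
    {μ : Measure (V → ℕ → Bool)} {p₀ p : ℝ} (hμ : IsLabelMeasure μ p₀ p)
    (hp₀ : p₀ ∈ Ioo (0 : ℝ) 1) (hp : p ∈ Ioo (0 : ℝ) 1) (l : ℕ) : 2 * (l + 1) < n →
    (∃ c : ℝ, ∀ v u, G.Adj u v → μ.real (CE G l v u) = c) ∧
    (∃ d : ℝ, ∀ v u, G.Adj u v → μ.real (DE G l v u) = d) := by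
  induction l using Nat.strong_induction_on with
  | _ l ih =>
    intro hl
    have := hμ.1
    have hF : ∀ j, ∃ t : ℝ, j ≤ l → ∀ v u, G.Adj u v → μ.real (FE G j v u) = t := by
      intro j
      cases j with
      | zero =>
        refine ⟨p₀, fun _ v u h => ?_⟩
        rw [FE_zero, Lab_real hμ hp₀ hp]; simp
      | succ j =>
        by_cases hj : j + 1 ≤ l
        · obtain ⟨_, d, hd⟩ := ih j (by omega) (by omega)
          refine ⟨p * d, fun _ v u h => ?_⟩
          rw [FE_succ_real G hμ hp₀ hp j v u h, hd v u h]
        · exact ⟨0, fun h => absurd h hj⟩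
    choose t ht using hF
    have hc : ∀ v u, G.Adj u v → μ.real (CE G l v u) = ∑ j ∈ Finset.range (l + 1), t j := by
      intro v u h
      rw [CE_real G hμ l v u h]
      refine Finset.sum_congr rfl fun j hj => ?_
      exact ht j (by have := Finset.mem_range.1 hj; omega) v u h
    refine ⟨⟨_, hc⟩, ?_⟩
    set c := ∑ j ∈ Finset.range (l + 1), t j
    refine ⟨(r - 1 : ℕ) * ∑ j ∈ Finset.range (l + 1),
      (∏ k ∈ Miss j l, (1 - if k = 0 then p₀ else p)) * (t j * (1 - c) ^ (r - 1 - 1)), ?_⟩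
    intro v u h
    have hcard : ((nb G v).erase u).card = r - 1 := by
      rw [Finset.card_erase_of_mem (mem_nb.2 h.symm), nb_card hreg]
    have hadj : ∀ w ∈ (nb G v).erase u, G.Adj v w := fun w hw =>
      mem_nb.1 (Finset.mem_of_mem_erase hw)
    rw [DE_real G hg hl hμ v u, ← hcard, ← nsmul_eq_mul, ← Finset.sum_const]
    refine Finset.sum_congr rfl fun w hw => Finset.sum_congr rfl fun j hj => ?_
    rw [ME_real hμ hp₀ hp, ht j (by have := Finset.mem_range.1 hj; omega) w v (hadj w hw)]
    congr 2
    rw [← Finset.card_erase_of_mem hw]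
    apply Finset.prod_eq_pow_card
    intro w' hw'
    have ha := hadj w' (Finset.mem_of_mem_erase hw')
    rw [probReal_compl_eq_one_sub (CE_measurable G l w' v ha), hc w' v ha]

theorem CE_lt_one [Countable V] (G : SimpleGraph V)
    {μ : Measure (V → ℕ → Bool)} {p₀ p : ℝ} (hμ : IsLabelMeasure μ p₀ p)
    (hp₀ : p₀ ∈ Ioo (0 : ℝ) 1) (hp : p ∈ Ioo (0 : ℝ) 1) (l : ℕ) (v u : V) (h : G.Adj u v) :
    0 < 1 - μ.real (CE G l v u) := by
  have := hμ.1
  rw [← probReal_compl_eq_one_sub (CE_measurable G l v u h)]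
  refine lt_of_lt_of_le ?_ (measureReal_mono (s₁ := ME (Finset.range (l + 1)) v) ?_)
  · rw [ME_real hμ hp₀ hp]
    refine Finset.prod_pos fun k _ => ?_
    split_ifs
    · linarith [hp₀.2]
    · linarith [hp.2]
  · intro ω hω
    refine not_cav_of G (labels ω) l v u (hω 0 (by simp)) fun k hk hks => ?_
    exact absurd hks (hω (k + 1) (by simp; omega))

theorem WEv_real [Fintype V] (G : SimpleGraph V) {n r l : ℕ} (hreg : IsRegular G r)
    (hg : (n : ℕ∞) ≤ G.egirth) (hl : 2 * (l + 1) < n)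
    {μ : Measure (V → ℕ → Bool)} {p₀ p : ℝ} (hμ : IsLabelMeasure μ p₀ p)
    (hp₀ : p₀ ∈ Ioo (0 : ℝ) 1) (hp : p ∈ Ioo (0 : ℝ) 1) (c : ℝ)
    (hc : ∀ v u, G.Adj u v → μ.real (CE G l v u) = c) (u : V) :
    MeasurableSet (WEv G l u) ∧ μ.real (WEv G l u) = (1 - p₀) * (1 - c) ^ r := by
  have := hμ.1
  have e : WEv G l u = ME {0} u ∩ ⋂ v ∈ nb G u, (CE G l v u)ᶜ := by
    ext ω
    simp only [WEv, mem_ofPred_eq, white_iff, ME, CE, mem_inter_iff, mem_iInter, mem_nb,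
      Finset.mem_singleton, forall_eq, mem_compl_iff]
  constructor
  · rw [e]
    exact (Fm_le _ _ (ME_meas _ _)).inter (Finset.measurableSet_biInter _ fun v hv =>
      (CE_measurable G _ _ _ (mem_nb.1 hv)).compl)
  · rw [e, star G hg hl hμ u (nb G u) _ _ (ME_meas _ _)
      (fun w hw => (CE_meas' G le_rfl w u (mem_nb.1 hw)).compl), ME_real hμ hp₀ hp, ← nb_card hreg u]
    congr 1
    · simp
    · apply Finset.prod_eq_pow_card
      intro w hw
      rw [probReal_compl_eq_one_sub (CE_measurable G l w u (mem_nb.1 hw)), hc _ _ (mem_nb.1 hw)]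

open Classical in
theorem BW_real [Fintype V] (G : SimpleGraph V) {n r l : ℕ} (hreg : IsRegular G r)
    (hg : (n : ℕ∞) ≤ G.egirth) (hl : 2 * (l + 2) < n)
    {μ : Measure (V → ℕ → Bool)} {p₀ p : ℝ} (hμ : IsLabelMeasure μ p₀ p)
    (hp₀ : p₀ ∈ Ioo (0 : ℝ) 1) (hp : p ∈ Ioo (0 : ℝ) 1) (c d : ℝ)
    (hc : ∀ v u, G.Adj u v → μ.real (CE G l v u) = c)
    (hd : ∀ v u, G.Adj u v → μ.real (DE G l v u) = d) (v u : V) (h : G.Adj v u) :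
    μ.real (BEv G l v ∩ WEv G l u) = (1 - p₀) * (d * (1 - c) ^ (r - 1)) := by
  have := hμ.1
  have e : BEv G l v ∩ WEv G l u =
      {ω | ω ∈ ME {0} u ∧ ω ∈ DE G l v u ∧ ∀ w ∈ (nb G u).erase v, ω ∈ (CE G l w u)ᶜ} := by
    ext ω
    have := blue_white_iff G (labels ω) l h
    simp only [WEv, BEv, mem_ofPred_eq, ME, CE, DE, mem_inter_iff, mem_nb, Finset.mem_erase,
      Finset.mem_singleton, forall_eq, mem_compl_iff, this, and_comm]
  have hv : v ∈ nb G u := mem_nb.2 h.symm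
  rw [e, star1 G hg (l := l + 1) (by omega) hμ u (nb G u) v hv _ _ _ (ME_meas _ _)
    (Fm_mono (Set.prod_mono le_rfl (subset_univ _)) _ (DE_meas G l v u h.symm))
    (fun w hw => (CE_meas' G (Nat.le_succ l) w u (mem_nb.1 hw)).compl), ME_real hμ hp₀ hp,
    hd _ _ h.symm]
  congr 1
  · simp
  · congr 1
    rw [← nb_card hreg u, ← Finset.card_erase_of_mem hv]
    apply Finset.prod_eq_pow_card
    intro w hw
    have ha := mem_nb.1 (Finset.mem_of_mem_erase hw)
    rw [probReal_compl_eq_one_sub (CE_measurable G l w u ha), hc _ _ ha]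

open Classical in
theorem WB_real [Fintype V] (G : SimpleGraph V) {n r l : ℕ} (hreg : IsRegular G r)
    (hg : (n : ℕ∞) ≤ G.egirth) (hl : 2 * (l + 2) < n)
    {μ : Measure (V → ℕ → Bool)} {p₀ p : ℝ} (hμ : IsLabelMeasure μ p₀ p)
    (hp₀ : p₀ ∈ Ioo (0 : ℝ) 1) (hp : p ∈ Ioo (0 : ℝ) 1) (c d : ℝ)
    (hc : ∀ v u, G.Adj u v → μ.real (CE G (l + 1) v u) = c)
    (hd : ∀ v u, G.Adj u v → μ.real (DE G l v u) = d) (u : V) :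
    μ.real (WEv G l u ∩ BEv G (l + 1) u) = r * ((1 - p₀) * ((p * d) * (1 - c) ^ (r - 1))) := by
  have := hμ.1
  let Z : V → Set (V → ℕ → Bool) := fun v =>
    {ω | ω ∈ ME {0} u ∧ ω ∈ FE G (l + 1) v u ∧
      ∀ w ∈ (nb G u).erase v, ω ∈ (CE G (l + 1) w u)ᶜ}
  have e : WEv G l u ∩ BEv G (l + 1) u = ⋃ v ∈ nb G u, Z v := by
    ext ω
    have := white_blue_succ_iff G (labels ω) l u
    simp only [WEv, BEv, mem_ofPred_eq, ME, CE, FE, mem_inter_iff, mem_nb, Finset.mem_erase,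
      Finset.mem_singleton, forall_eq, mem_compl_iff, this, mem_iUnion, exists_prop, Z, fst_succ]
    simp only [and_comm]
  have hZ : ∀ v ∈ nb G u, μ.real (Z v) = (1 - p₀) * ((p * d) * (1 - c) ^ (r - 1)) := by
    intro v hv
    have hv' := mem_nb.1 hv
    rw [show Z v = _ from rfl, star1 G hg (l := l + 1) (by omega) hμ u (nb G u) v hv _ _ _
      (ME_meas _ _) (FE_meas G (l + 1) v u hv')
      (fun w hw => (CE_meas' G le_rfl w u (mem_nb.1 hw)).compl), ME_real hμ hp₀ hp,
      FE_succ_real G hμ hp₀ hp _ _ _ hv', hd _ _ hv']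
    congr 1
    · simp
    · congr 1
      rw [← nb_card hreg u, ← Finset.card_erase_of_mem hv]
      apply Finset.prod_eq_pow_card
      intro w hw
      have ha := mem_nb.1 (Finset.mem_of_mem_erase hw)
      rw [probReal_compl_eq_one_sub (CE_measurable G _ w u ha), hc _ _ ha]
  rw [e, measureReal_biUnion_finset, Finset.sum_congr rfl hZ, Finset.sum_const, nb_card hreg,
    nsmul_eq_mul]
  · rintro v hv v' hv' hne
    refine Set.disjoint_left.2 ?_
    rintro ω ⟨_, h2, h3⟩ ⟨_, h2', h3'⟩
    exact h3' v (Finset.mem_erase.2 ⟨hne, hv⟩) h2.1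
  · intro v hv
    have e : Z v = ME {0} u ∩ (FE G (l + 1) v u ∩
      ⋂ w ∈ (nb G u).erase v, (CE G (l + 1) w u)ᶜ) := by
      ext ω
      simp only [Z, mem_inter_iff, mem_iInter, mem_ofPred_eq]
    rw [e]
    refine (Fm_le _ _ (ME_meas _ _)).inter ((FE_measurable G _ _ _ (mem_nb.1 hv)).inter ?_)
    refine Finset.measurableSet_biInter _ fun w hw => ?_
    exact (CE_measurable G _ _ _ (mem_nb.1 (Finset.mem_of_mem_erase hw))).compl

/-- `P(u ∈ W_i | u ∈ W_{i−1}) = (1 − p·s_{i−1}/w_{i−1})^r` and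
`P(u ∈ B_i | u ∈ W_{i−1}) = (r·p·s_{i−1}/w_{i−1})·(1 − p·s_{i−1}/w_{i−1})^{r−1}`,
where `w_{i−1}` and `s_{i−1}` are computed from any vertex `a` and neighbour `c`. -/
theorem cond_prob_white_and_blue_given_white
    [Fintype V] (r g : ℕ) (G : SimpleGraph V)
    (hreg : IsRegular G r) (hg : (g : ℕ∞) ≤ G.egirth)
    (p₀ p : ℝ) (hp₀ : p₀ ∈ Ioo (0 : ℝ) 1) (hp : p ∈ Ioo (0 : ℝ) 1)
    (μ : Measure (V → ℕ → Bool)) (hμ : IsLabelMeasure μ p₀ p)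
    (i : ℕ) (hi : 1 ≤ i) (hi1 : 2 * i < g - 3) (hi2 : 2 * (i + 2) < g - 2)
    (u a c : V) (hac : G.Adj a c) :
    (μ[|WEv G (i - 1) u] (WEv G i u)).toReal
      = (1 - p * (μ (BEv G (i - 1) a ∩ WEv G (i - 1) c)).toReal
            / (μ (WEv G (i - 1) a)).toReal) ^ r ∧
    (μ[|WEv G (i - 1) u] (BEv G i u)).toReal
      = r * p * (μ (BEv G (i - 1) a ∩ WEv G (i - 1) c)).toReal
            / (μ (WEv G (i - 1) a)).toReal
          * (1 - p * (μ (BEv G (i - 1) a ∩ WEv G (i - 1) c)).toReal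
              / (μ (WEv G (i - 1) a)).toReal) ^ (r - 1) := by
  obtain ⟨l, rfl⟩ : ∃ l, i = l + 1 := ⟨i - 1, by omega⟩
  simp only [Nat.add_sub_cancel]
  have := hμ.1
  have hg' : 2 * (l + 3) < g := by omega
  obtain ⟨⟨x, hx⟩, ⟨d, hd⟩⟩ := DE_const G hreg hg hμ hp₀ hp l (by omega)
  have hy : ∀ v u, G.Adj u v → μ.real (CE G (l + 1) v u) = x + p * d := by
    intro v u h
    rw [CE_succ_real G hμ hp₀ hp l v u h, hx v u h, hd v u h]
  have hpos : 0 < 1 - x := by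
    have := CE_lt_one G hμ hp₀ hp l c a hac
    rwa [hx c a hac] at this
  have hq : 0 < 1 - p₀ := by linarith [hp₀.2]
  obtain ⟨mW, hW⟩ := WEv_real G hreg hg (l := l) (by omega) hμ hp₀ hp x hx u
  obtain ⟨_, hWa⟩ := WEv_real G hreg hg (l := l) (by omega) hμ hp₀ hp x hx a
  obtain ⟨_, hW'⟩ := WEv_real G hreg hg (l := l + 1) (by omega) hμ hp₀ hp _ hy u
  have hBW := BW_real G hreg hg (l := l) (by omega) hμ hp₀ hp x d hx hd a c hac
  have hWB := WB_real G hreg hg (l := l) (by omega) hμ hp₀ hp _ d hy hd u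
  have hsub : WEv G l u ∩ WEv G (l + 1) u = WEv G (l + 1) u := by
    refine Set.inter_eq_right.2 fun ω hω => ?_
    have hω' : u ∈ White G (labels ω) (l + 1) := hω
    show u ∈ White G (labels ω) l
    rw [white_iff] at hω' ⊢
    exact ⟨hω'.1, fun v hv hc => hω'.2 v hv (hc.mono (by omega))⟩
  obtain ⟨r, rfl⟩ : ∃ k, r = k + 1 := by
    refine ⟨r - 1, ?_⟩
    have h1 : 0 < (nb G a).card := Finset.card_pos.2 ⟨c, mem_nb.2 hac⟩
    rw [nb_card hreg] at h1
    omega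
  simp only [Nat.add_sub_cancel, Measure.real] at *
  have hfrac : ∀ z : ℝ, z * ((1 - p₀) * (d * (1 - x) ^ r)) / ((1 - p₀) * (1 - x) ^ (r + 1))
      = z * d / (1 - x) := by
    intro z
    have := hq.ne'
    have := hpos.ne'
    field_simp
    ring
  have h1 : 1 - p * d / (1 - x) = (1 - (x + p * d)) / (1 - x) := by
    have := hpos.ne'
    field_simp
    ring
  rw [cond_apply mW, cond_apply mW, hsub, ENNReal.toReal_mul, ENNReal.toReal_mul,
    ENNReal.toReal_inv, hW, hW', hWB, hWa, hBW, hfrac, hfrac, h1]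
  have := hq.ne'
  have := hpos.ne'
  constructor
  · rw [div_pow]
    field_simp
  · rw [div_pow]
    field_simp
    ring

end InducedForest
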